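/- arXiv:0808.4125 — 4 statements merged into one kernel-verified Lean document; each statement's English description precedes it below -/
import Mathlib

section
/- Let V be a finite-dimensional real vector space and let ⟨(x,α),(y,β)⟩ := α(y) + β(x) be the canonical pairing on V ⊕ V*. Fix λ ∈ ℝ. An endomorphism J of V ⊕ V* satisfies ⟨Ju,v⟩ + ⟨u,Jv⟩ = 0 for all u,v ∈ V ⊕ V* together with J² = λ·id if and only if there exist linear maps N : V → V, π : V* → V and σ : V → V* with π skew-symmetric (α(πβ) = −β(πα) for all α,β ∈ V*) and σ skew-symmetric (σ(x)(y) = −σ(y)(x) for all x,y ∈ V) such that J(x,α) = (Nx + πα, σx − tNα) for all x ∈ V, α ∈ V* (where (tNα)(x) = α(Nx)), and moreover N ∘ π = π ∘ tN, σ ∘ N = tN ∘ σ, and N² + π ∘ σ = λ·id_V. -/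
/-!
Write `J` as a 2 × 2 block matrix. Testing the pairing on pairs of vectors from the two summands
shows that `J` is skew-adjoint iff its off-diagonal blocks `π`, `σ` are skew and its lower diagonal
block is minus the transpose of the upper one `N`. Then `J² = λ` amounts to four block equations:
the off-diagonal ones are the commutation relations, the upper diagonal one is `N² + πσ = λ`, and
the lower diagonal one is its transpose, because `σπ` is the transpose of `πσ` when both are skew.
-/

open Module (Dual)

section BlockMap

variable {R M₁ M₂ M₃ N₁ N₂ N₃ : Type*} [Semiring R]
  [AddCommMonoid M₁] [Module R M₁] [AddCommMonoid M₂] [Module R M₂]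
  [AddCommMonoid M₃] [Module R M₃] [AddCommMonoid N₁] [Module R N₁]
  [AddCommMonoid N₂] [Module R N₂] [AddCommMonoid N₃] [Module R N₃]

/-- The linear map between direct sums with block matrix `!![A, B; C, D]`, the analogue for linear
maps of `Matrix.fromBlocks`. -/
def blockMap (A : M₁ →ₗ[R] M₂) (B : N₁ →ₗ[R] M₂) (C : M₁ →ₗ[R] N₂) (D : N₁ →ₗ[R] N₂) :
    M₁ × N₁ →ₗ[R] M₂ × N₂ :=
  (A.coprod B).prod (C.coprod D)

theorem blockMap_apply (A : M₁ →ₗ[R] M₂) (B : N₁ →ₗ[R] M₂) (C : M₁ →ₗ[R] N₂) (D : N₁ →ₗ[R] N₂)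
    (u : M₁ × N₁) : blockMap A B C D u = (A u.1 + B u.2, C u.1 + D u.2) :=
  rfl

theorem eq_blockMap_iff {J : M₁ × N₁ →ₗ[R] M₂ × N₂} {A : M₁ →ₗ[R] M₂} {B : N₁ →ₗ[R] M₂}
    {C : M₁ →ₗ[R] N₂} {D : N₁ →ₗ[R] N₂} :
    J = blockMap A B C D ↔ ∀ x y, J (x, y) = (A x + B y, C x + D y) := by
  simp only [LinearMap.ext_iff, Prod.forall, blockMap_apply]

theorem exists_eq_blockMap (J : M₁ × N₁ →ₗ[R] M₂ × N₂) :
    ∃ A B C D, J = blockMap A B C D := by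
  refine ⟨.fst R M₂ N₂ ∘ₗ J ∘ₗ .inl R M₁ N₁, .fst R M₂ N₂ ∘ₗ J ∘ₗ .inr R M₁ N₁,
    .snd R M₂ N₂ ∘ₗ J ∘ₗ .inl R M₁ N₁, .snd R M₂ N₂ ∘ₗ J ∘ₗ .inr R M₁ N₁, ?_⟩
  simp only [blockMap, ← LinearMap.comp_assoc, LinearMap.coprod_comp_inl_inr]
  rfl

theorem blockMap_inj {A A' : M₁ →ₗ[R] M₂} {B B' : N₁ →ₗ[R] M₂} {C C' : M₁ →ₗ[R] N₂}
    {D D' : N₁ →ₗ[R] N₂} :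
    blockMap A B C D = blockMap A' B' C' D' ↔ A = A' ∧ B = B' ∧ C = C' ∧ D = D' := by
  constructor
  · intro h
    have apply_eq (u : M₁ × N₁) := LinearMap.congr_fun h u
    simp only [blockMap_apply, Prod.mk.injEq] at apply_eq
    refine ⟨LinearMap.ext fun x ↦ ?_, LinearMap.ext fun y ↦ ?_,
      LinearMap.ext fun x ↦ ?_, LinearMap.ext fun y ↦ ?_⟩
    · simpa using (apply_eq (x, 0)).1
    · simpa using (apply_eq (0, y)).1
    · simpa using (apply_eq (x, 0)).2
    · simpa using (apply_eq (0, y)).2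
  · rintro ⟨rfl, rfl, rfl, rfl⟩
    rfl

theorem blockMap_comp (A : M₂ →ₗ[R] M₃) (B : N₂ →ₗ[R] M₃) (C : M₂ →ₗ[R] N₃) (D : N₂ →ₗ[R] N₃)
    (A' : M₁ →ₗ[R] M₂) (B' : N₁ →ₗ[R] M₂) (C' : M₁ →ₗ[R] N₂) (D' : N₁ →ₗ[R] N₂) :
    blockMap A B C D ∘ₗ blockMap A' B' C' D' =
      blockMap (A ∘ₗ A' + B ∘ₗ C') (A ∘ₗ B' + B ∘ₗ D')
        (C ∘ₗ A' + D ∘ₗ C') (C ∘ₗ B' + D ∘ₗ D') := by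
  ext <;> simp [blockMap]

theorem smul_id_eq_blockMap {R M N : Type*} [CommSemiring R] [AddCommMonoid M] [Module R M]
    [AddCommMonoid N] [Module R N] (c : R) :
    (c • LinearMap.id : M × N →ₗ[R] M × N) =
      blockMap (c • LinearMap.id) 0 0 (c • LinearMap.id) := by
  ext <;> simp [blockMap]

end BlockMap

section CanonicalPairing

/-- The canonical pairing `⟨(x, α), (y, β)⟩ = α y + β x` on `M × Dual R M`, obtained from
`LinearMap.dualProd`, which lives on `Dual R M × M`, by swapping the factors. -/
def canonicalPairing (R M : Type*) [CommSemiring R] [AddCommMonoid M] [Module R M] :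
    LinearMap.BilinForm R (M × Dual R M) :=
  (LinearMap.dualProd R M).compl₁₂ (LinearEquiv.prodComm R M (Dual R M)).toLinearMap
    (LinearEquiv.prodComm R M (Dual R M)).toLinearMap

theorem canonicalPairing_apply {R M : Type*} [CommSemiring R] [AddCommMonoid M] [Module R M]
    (u v : M × Dual R M) : canonicalPairing R M u v = u.2 v.1 + v.2 u.1 :=
  add_comm _ _

variable {R M : Type*} [CommRing R] [AddCommGroup M] [Module R M]

theorem isSkewAdjoint_canonicalPairing_iff {J : M × Dual R M →ₗ[R] M × Dual R M} :
    (canonicalPairing R M).IsSkewAdjoint J ↔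
      ∀ u v, ((J u).2 v.1 + v.2 (J u).1) + (u.2 (J v).1 + (J v).2 u.1) = 0 := by
  simp only [LinearMap.IsSkewAdjoint, LinearMap.IsAdjointPair, Pi.neg_apply, map_neg,
    eq_neg_iff_add_eq_zero, canonicalPairing_apply]

theorem eq_blockMap_neg_dualMap_iff {J : M × Dual R M →ₗ[R] M × Dual R M} {N : M →ₗ[R] M}
    {π : Dual R M →ₗ[R] M} {σ : M →ₗ[R] Dual R M} :
    J = blockMap N π σ (-N.dualMap) ↔
      ∀ x α, J (x, α) = (N x + π α, σ x - N.dualMap α) := by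
  simp only [eq_blockMap_iff, LinearMap.neg_apply, sub_eq_add_neg]

theorem isSkewAdjoint_blockMap_iff {N : M →ₗ[R] M} {π : Dual R M →ₗ[R] M}
    {σ : M →ₗ[R] Dual R M} {D : Dual R M →ₗ[R] Dual R M} :
    (canonicalPairing R M).IsSkewAdjoint (blockMap N π σ D) ↔
      (∀ α β : Dual R M, α (π β) = -β (π α)) ∧ (∀ x y, σ x y = -σ y x) ∧ D = -N.dualMap := by
  simp only [isSkewAdjoint_canonicalPairing_iff, blockMap_apply]
  constructor
  · intro h
    refine ⟨fun α β ↦ ?_, fun x y ↦ ?_, LinearMap.ext fun α ↦ LinearMap.ext fun y ↦ ?_⟩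
    · have pairing_dual_dual := h (0, α) (0, β)
      simp only [map_zero, zero_add, add_zero] at pairing_dual_dual
      linear_combination pairing_dual_dual
    · have pairing_vec_vec := h (x, 0) (y, 0)
      simp only [map_zero, LinearMap.zero_apply, zero_add, add_zero] at pairing_vec_vec
      linear_combination pairing_vec_vec
    · have pairing_dual_vec := h (0, α) (y, 0)
      simp only [map_zero, LinearMap.zero_apply, zero_add, add_zero] at pairing_dual_vec
      simp only [LinearMap.neg_apply, LinearMap.dualMap_apply]
      linear_combination pairing_dual_vec
  · rintro ⟨hπ, hσ, rfl⟩ ⟨x, α⟩ ⟨y, β⟩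
    simp only [LinearMap.add_apply, LinearMap.neg_apply, LinearMap.dualMap_apply, map_add]
    linear_combination hπ α β + hσ x y

theorem dualMap_comp_of_skew {π : Dual R M →ₗ[R] M} {σ : M →ₗ[R] Dual R M}
    (hπ : ∀ α β : Dual R M, α (π β) = -β (π α)) (hσ : ∀ x y, σ x y = -σ y x) :
    (π ∘ₗ σ).dualMap = σ ∘ₗ π := by
  ext α y
  calc α (π (σ y)) = -σ y (π α) := hπ α (σ y)
    _ = σ (π α) y := (hσ (π α) y).symm

theorem blockMap_neg_dualMap_comp_self (N : M →ₗ[R] M) (π : Dual R M →ₗ[R] M)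
    (σ : M →ₗ[R] Dual R M) :
    blockMap N π σ (-N.dualMap) ∘ₗ blockMap N π σ (-N.dualMap) =
      blockMap (N ∘ₗ N + π ∘ₗ σ) (N ∘ₗ π - π ∘ₗ N.dualMap)
        (σ ∘ₗ N - N.dualMap ∘ₗ σ) (σ ∘ₗ π + N.dualMap ∘ₗ N.dualMap) := by
  rw [blockMap_comp, blockMap_inj]
  refine ⟨rfl, ?_, ?_, ?_⟩ <;> ext <;> simp [sub_eq_add_neg]

theorem blockMap_comp_self_eq_smul_id_iff_of_skew {N : M →ₗ[R] M} {π : Dual R M →ₗ[R] M}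
    {σ : M →ₗ[R] Dual R M} (hπ : ∀ α β : Dual R M, α (π β) = -β (π α)) (hσ : ∀ x y, σ x y = -σ y x)
    (c : R) :
    blockMap N π σ (-N.dualMap) ∘ₗ blockMap N π σ (-N.dualMap) = c • LinearMap.id ↔
      N ∘ₗ π = π ∘ₗ N.dualMap ∧ σ ∘ₗ N = N.dualMap ∘ₗ σ ∧
        N ∘ₗ N + π ∘ₗ σ = c • LinearMap.id := by
  have lower_of_upper (h : N ∘ₗ N + π ∘ₗ σ = c • LinearMap.id) :
      σ ∘ₗ π + N.dualMap ∘ₗ N.dualMap = c • LinearMap.id :=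
    calc σ ∘ₗ π + N.dualMap ∘ₗ N.dualMap = (N ∘ₗ N + π ∘ₗ σ).dualMap := by
          rw [← dualMap_comp_of_skew hπ hσ, LinearMap.dualMap_comp_dualMap, add_comm]
          exact (map_add Module.Dual.transpose _ _).symm
      _ = c • LinearMap.id := by
          rw [h, ← LinearMap.dualMap_id]
          exact map_smul Module.Dual.transpose _ _
  rw [blockMap_neg_dualMap_comp_self, smul_id_eq_blockMap, blockMap_inj]
  exact ⟨fun ⟨upper, hNπ, hσN, _⟩ ↦ ⟨sub_eq_zero.mp hNπ, sub_eq_zero.mp hσN, upper⟩,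
    fun ⟨hNπ, hσN, upper⟩ ↦
      ⟨upper, sub_eq_zero.mpr hNπ, sub_eq_zero.mpr hσN, lower_of_upper upper⟩⟩

end CanonicalPairing

theorem almost_cps_matrix_characterization_general
    {R M : Type*} [CommRing R] [AddCommGroup M] [Module R M]
    (c : R) (J : (M × Dual R M) →ₗ[R] (M × Dual R M)) :
    ((∀ u v : M × Dual R M,
        ((J u).2 v.1 + v.2 (J u).1) + (u.2 (J v).1 + (J v).2 u.1) = 0) ∧
      J ∘ₗ J = c • LinearMap.id) ↔
    ∃ (N : M →ₗ[R] M) (π : Dual R M →ₗ[R] M) (σ : M →ₗ[R] Dual R M),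
      (∀ α β : Dual R M, α (π β) = -β (π α)) ∧
      (∀ x y : M, σ x y = -σ y x) ∧
      (∀ (x : M) (α : Dual R M), J (x, α) = (N x + π α, σ x - N.dualMap α)) ∧
      N ∘ₗ π = π ∘ₗ N.dualMap ∧
      σ ∘ₗ N = N.dualMap ∘ₗ σ ∧
      N ∘ₗ N + π ∘ₗ σ = c • LinearMap.id := by
  simp only [← isSkewAdjoint_canonicalPairing_iff, ← eq_blockMap_neg_dualMap_iff]
  constructor
  · rintro ⟨hskew, hsq⟩
    obtain ⟨N, π, σ, D, rfl⟩ := exists_eq_blockMap J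
    obtain ⟨hπ, hσ, rfl⟩ := isSkewAdjoint_blockMap_iff.mp hskew
    exact ⟨N, π, σ, hπ, hσ, rfl, (blockMap_comp_self_eq_smul_id_iff_of_skew hπ hσ c).mp hsq⟩
  · rintro ⟨N, π, σ, hπ, hσ, rfl, hblocks⟩
    exact ⟨isSkewAdjoint_blockMap_iff.mpr ⟨hπ, hσ, rfl⟩,
      (blockMap_comp_self_eq_smul_id_iff_of_skew hπ hσ c).mpr hblocks⟩

/-- On `V ⊕ V*` with the canonical pairing
`⟨(x,α),(y,β)⟩ = α y + β x`, an endomorphism `J` is orthogonal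
(`⟨Ju,v⟩ + ⟨u,Jv⟩ = 0`) and satisfies `J² = λ·id` iff it has the matrix form
`J(x,α) = (Nx + πα, σx − ᵗNα)` with `π`, `σ` skew-symmetric and
`N∘π = π∘ᵗN`, `σ∘N = ᵗN∘σ`, `N² + π∘σ = λ·id`. -/
theorem almost_cps_matrix_characterization
    {V : Type*} [AddCommGroup V] [Module ℝ V] [FiniteDimensional ℝ V]
    (lam : ℝ)
    (J : (V × Module.Dual ℝ V) →ₗ[ℝ] (V × Module.Dual ℝ V)) :
    ((∀ u v : V × Module.Dual ℝ V,
        ((J u).2 v.1 + v.2 (J u).1) + (u.2 (J v).1 + (J v).2 u.1) = 0) ∧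
      J ∘ₗ J = lam • LinearMap.id) ↔
    ∃ (N : V →ₗ[ℝ] V) (π : Module.Dual ℝ V →ₗ[ℝ] V)
        (σ : V →ₗ[ℝ] Module.Dual ℝ V),
      (∀ α β : Module.Dual ℝ V, α (π β) = -β (π α)) ∧
      (∀ x y : V, σ x y = -σ y x) ∧
      (∀ (x : V) (α : Module.Dual ℝ V),
        J (x, α) = (N x + π α, σ x - N.dualMap α)) ∧
      N ∘ₗ π = π ∘ₗ N.dualMap ∧
      σ ∘ₗ N = N.dualMap ∘ₗ σ ∧
      N ∘ₗ N + π ∘ₗ σ = lam • LinearMap.id :=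
  almost_cps_matrix_characterization_general lam J
end

section
/- Let (π, N, ψ, H) be a Poisson quasi-Nijenhuis structure with background on a finite-dimensional real Lie algebra g. Then: (a) the bracket [·,·]_π satisfies the Jacobi identity on g* (so (g*, [·,·]_π) is a Lie algebra); and (b) if δ denotes the unique degree-one derivation of the exterior algebra Λ•g* that vanishes on scalars and satisfies δα = d_N α − H(πα, ·, ·) for every α ∈ g*, then δ(ψ + i_N H) = 0. -/
namespace PqN

variable {g : Type*} [LieRing g] [LieAlgebra ℝ g]

noncomputable def adStar (x : g) (α : Module.Dual ℝ g) : Module.Dual ℝ g :=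
  -(α ∘ₗ (LieAlgebra.ad ℝ g x : g →ₗ[ℝ] g))

noncomputable def brPi (π : Module.Dual ℝ g →ₗ[ℝ] g) (α β : Module.Dual ℝ g) :
    Module.Dual ℝ g :=
  adStar (π α) β - adStar (π β) α

def brN (N : g →ₗ[ℝ] g) (x y : g) : g := ⁅N x, y⁆ + ⁅x, N y⁆ - N ⁅x, y⁆

def torN (N : g →ₗ[ℝ] g) (x y : g) : g := ⁅N x, N y⁆ - N (brN N x y)

noncomputable def brNmap (N : g →ₗ[ℝ] g) (x : g) : g →ₗ[ℝ] g :=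
  (LieAlgebra.ad ℝ g (N x) : g →ₗ[ℝ] g) + (LieAlgebra.ad ℝ g x : g →ₗ[ℝ] g) ∘ₗ N
    - N ∘ₗ (LieAlgebra.ad ℝ g x : g →ₗ[ℝ] g)

noncomputable def brNPi (π : Module.Dual ℝ g →ₗ[ℝ] g) (N : g →ₗ[ℝ] g)
    (α β : Module.Dual ℝ g) : Module.Dual ℝ g :=
  -(β ∘ₗ brNmap N (π α)) + α ∘ₗ brNmap N (π β)

noncomputable def conc (π : Module.Dual ℝ g →ₗ[ℝ] g) (N : g →ₗ[ℝ] g)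
    (α β : Module.Dual ℝ g) : Module.Dual ℝ g :=
  brNPi π N α β - brPi π (N.dualMap α) β - brPi π α (N.dualMap β) + N.dualMap (brPi π α β)

def lie (x y : g) : g := ⁅x, y⁆

def dTwo (br : g → g → g) (ω : g → g → ℝ) (x y z : g) : ℝ :=
  -ω (br x y) z + ω (br x z) y - ω (br y z) x

def dThree (br : g → g → g) (φ : g → g → g → ℝ) (x₀ x₁ x₂ x₃ : g) : ℝ :=
  -φ (br x₀ x₁) x₂ x₃ + φ (br x₀ x₂) x₁ x₃ - φ (br x₀ x₃) x₁ x₂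
    - φ (br x₁ x₂) x₀ x₃ + φ (br x₁ x₃) x₀ x₂ - φ (br x₂ x₃) x₀ x₁

def calH (N : g →ₗ[ℝ] g) (H : g → g → g → ℝ) (x y z : g) : ℝ :=
  H (N x) (N y) z + H (N y) (N z) x + H (N z) (N x) y

def iN2 (N : g →ₗ[ℝ] g) (τ : g → g → ℝ) (x y : g) : ℝ := τ (N x) y + τ x (N y)

def iN3 (N : g →ₗ[ℝ] g) (η : g → g → g → ℝ) (x y z : g) : ℝ :=
  η (N x) y z + η x (N y) z + η x y (N z)

structure IsAlt3 (H : g → g → g → ℝ) : Prop where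
  lin1 : ∀ y z, IsLinearMap ℝ fun x => H x y z
  lin2 : ∀ x z, IsLinearMap ℝ fun y => H x y z
  lin3 : ∀ x y, IsLinearMap ℝ fun z => H x y z
  alt12 : ∀ x y z, H x y z = -H y x z
  alt23 : ∀ x y z, H x y z = -H x z y

noncomputable def dual3 (H : g → g → g → ℝ) (hH : IsAlt3 H) (x y : g) :
    Module.Dual ℝ g :=
  IsLinearMap.mk' (fun z => H x y z) (hH.lin3 x y)

structure IsPQNwB (π : Module.Dual ℝ g →ₗ[ℝ] g) (N : g →ₗ[ℝ] g)
    (ψ H : g → g → g → ℝ) : Prop where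
  skew : ∀ α β : Module.Dual ℝ g, α (π β) = -β (π α)
  poisson : ∀ α β γ : Module.Dual ℝ g,
    α ⁅π β, π γ⁆ + β ⁅π γ, π α⁆ + γ ⁅π α, π β⁆ = 0
  compat : N ∘ₗ π = π ∘ₗ N.dualMap
  alt_psi : IsAlt3 ψ
  alt_H : IsAlt3 H
  closed_psi : ∀ x y z w, dThree lie ψ x y z w = 0
  closed_H : ∀ x y z w, dThree lie H x y z w = 0
  conc_eq : ∀ α β z, conc π N α β z = 2 * H (π α) (π β) z
  torsion : ∀ x y, torN N x y =
    π (dual3 H alt_H (N x) y - dual3 H alt_H (N y) x + dual3 ψ alt_psi x y)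
  dN_psi : ∀ x y z w, dThree (brN N) ψ x y z w = dThree lie (calH N H) x y z w

def pr (u v : g × Module.Dual ℝ g) : ℝ := u.2 v.1 + v.2 u.1

noncomputable def dorf (H : g → g → g → ℝ) (hH : IsAlt3 H)
    (u v : g × Module.Dual ℝ g) : g × Module.Dual ℝ g :=
  (⁅u.1, v.1⁆, adStar u.1 v.2 - adStar v.1 u.2 + dual3 H hH u.1 v.1)

noncomputable def torJ (H : g → g → g → ℝ) (hH : IsAlt3 H)
    (J : g × Module.Dual ℝ g → g × Module.Dual ℝ g) (u v : g × Module.Dual ℝ g) :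
    g × Module.Dual ℝ g :=
  dorf H hH (J u) (J v) - J (dorf H hH (J u) v + dorf H hH u (J v) - J (dorf H hH u v))

noncomputable def dTwoDual (τ : g →ₗ[ℝ] Module.Dual ℝ g) (x y : g) : Module.Dual ℝ g :=
  -(τ ⁅x, y⁆) + (LinearMap.applyₗ y) ∘ₗ (τ ∘ₗ (LieAlgebra.ad ℝ g x : g →ₗ[ℝ] g))
    - (LinearMap.applyₗ x) ∘ₗ (τ ∘ₗ (LieAlgebra.ad ℝ g y : g →ₗ[ℝ] g))

end PqN

/-!
Write `φ = ψ + i_N H`, let `F♯` be the bracket `(x, y) ↦ π(F(x, y, ·))` attached to a 3-form `F`,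
and let `D_b` be the Chevalley–Eilenberg operator of a bracket `b`, so that
`δ = D_{[·,·]_N} - D_{H♯}`.

For every 3-form `H`, expanding `d_N (i_N H)` produces `dH` with `N` inserted in two slots, minus
`d𝓗`, minus `D_{T_N} H`. As `dH = 0` and `d_N ψ = d𝓗`, this leaves `δφ = -(D_{T_N} H + D_{H♯} φ)`.
The torsion condition says `T_N = φ♯ - N H♯`, and skew-symmetry of `π` gives the reciprocity
`D_{F♯} G = -D_{G♯} F`. Hence `δφ = D_{N H♯} H`, which vanishes by reciprocity for the bivector
`Nπ`.

The Jacobi identity for `[·,·]_π` holds because `π` intertwines `[·,·]_π` with the bracket of `g`,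
whose coadjoint action is a representation.
-/

namespace PqN

variable {g : Type*} [LieRing g] [LieAlgebra ℝ g]
variable {π : Module.Dual ℝ g →ₗ[ℝ] g} {N : g →ₗ[ℝ] g} {ψ F G H : g → g → g → ℝ}

/-- A linear map `π : g* → g` is a bivector if it is skew-symmetric. -/
def IsBivector (π : Module.Dual ℝ g →ₗ[ℝ] g) : Prop :=
  ∀ α β : Module.Dual ℝ g, α (π β) = -β (π α)

/-- A Poisson bivector, with `[π, π] = 0` written out on three covectors. -/
structure IsPoisson (π : Module.Dual ℝ g →ₗ[ℝ] g) : Prop where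
  isBivector : IsBivector π
  cyclic : ∀ α β γ : Module.Dual ℝ g, α ⁅π β, π γ⁆ + β ⁅π γ, π α⁆ + γ ⁅π α, π β⁆ = 0

theorem IsBivector.comp_of_compat (hπ : IsBivector π) (hN : N ∘ₗ π = π ∘ₗ N.dualMap) :
    IsBivector (N ∘ₗ π) := fun α β =>
  calc
    α (N (π β)) = N.dualMap α (π β) := rfl
    _ = -β ((π ∘ₗ N.dualMap) α) := hπ _ _
    _ = -β ((N ∘ₗ π) α) := by rw [hN]

theorem adStar_eq_lie (x : g) (α : Module.Dual ℝ g) : adStar x α = ⁅x, α⁆ := by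
  ext y
  simp [adStar]

theorem IsPoisson.map_brPi (hπ : IsPoisson π) (α β : Module.Dual ℝ g) :
    π (brPi π α β) = ⁅π α, π β⁆ := by
  rw [← sub_eq_zero, ← Module.forall_dual_apply_eq_zero_iff ℝ]
  intro γ
  have hcyc := hπ.cyclic α β γ
  rw [← lie_skew (π γ) (π α), map_neg] at hcyc
  rw [map_sub, hπ.isBivector]
  simp only [brPi, adStar, LinearMap.sub_apply, LinearMap.neg_apply, LinearMap.comp_apply,
    LieAlgebra.ad_apply]
  linarith

theorem IsPoisson.brPi_leibniz (hπ : IsPoisson π) (α β γ : Module.Dual ℝ g) :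
    brPi π α (brPi π β γ) = brPi π (brPi π α β) γ + brPi π β (brPi π α γ) := by
  have expand (μ ν ρ : Module.Dual ℝ g) :
      brPi π μ (brPi π ν ρ) = ⁅π μ, ⁅π ν, ρ⁆⁆ - ⁅π μ, ⁅π ρ, ν⁆⁆ - ⁅⁅π ν, π ρ⁆, μ⁆ := by
    rw [brPi, hπ.map_brPi]
    simp only [brPi, adStar_eq_lie, lie_sub]
  rw [expand, expand, brPi, hπ.map_brPi]
  simp only [brPi, adStar_eq_lie, lie_sub, lie_lie]
  abel

namespace IsAlt3

theorem map_add_left (hF : IsAlt3 F) (u v y z : g) : F (u + v) y z = F u y z + F v y z :=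
  (hF.lin1 y z).map_add u v

theorem map_sub_left (hF : IsAlt3 F) (u v y z : g) : F (u - v) y z = F u y z - F v y z :=
  (hF.lin1 y z).map_sub u v

theorem rotate (hF : IsAlt3 F) (x y z : g) : F x y z = F y z x := by
  rw [hF.alt12 x y z, hF.alt23 y x z, neg_neg]

protected theorem add (hF : IsAlt3 F) (hG : IsAlt3 G) : IsAlt3 (F + G) where
  lin1 y z := ((hF.lin1 y z).mk' _ + (hG.lin1 y z).mk' _).isLinear
  lin2 x z := ((hF.lin2 x z).mk' _ + (hG.lin2 x z).mk' _).isLinear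
  lin3 x y := ((hF.lin3 x y).mk' _ + (hG.lin3 x y).mk' _).isLinear
  alt12 x y z := by
    simp only [Pi.add_apply]
    rw [hF.alt12 x, hG.alt12 x, neg_add]
  alt23 x y z := by
    simp only [Pi.add_apply]
    rw [hF.alt23 x, hG.alt23 x, neg_add]

protected theorem iN3 (hF : IsAlt3 F) (N : g →ₗ[ℝ] g) : IsAlt3 (iN3 N F) where
  lin1 y z := ((hF.lin1 y z).mk' _ ∘ₗ N + (hF.lin1 (N y) z).mk' _ +
    (hF.lin1 y (N z)).mk' _).isLinear
  lin2 x z := ((hF.lin2 (N x) z).mk' _ + (hF.lin2 x z).mk' _ ∘ₗ N +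
    (hF.lin2 x (N z)).mk' _).isLinear
  lin3 x y := ((hF.lin3 (N x) y).mk' _ + (hF.lin3 x (N y)).mk' _ +
    (hF.lin3 x y).mk' _ ∘ₗ N).isLinear
  alt12 x y z := by
    simp only [iN3]
    rw [hF.alt12 (N x), hF.alt12 x (N y), hF.alt12 x y]
    ring
  alt23 x y z := by
    simp only [iN3]
    rw [hF.alt23 (N x), hF.alt23 x (N y), hF.alt23 x y]
    ring

theorem calH_apply (hF : IsAlt3 F) (x y z : g) :
    calH N F x y z = F (N x) (N y) z + F x (N y) (N z) + F (N x) y (N z) := by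
  rw [calH, ← hF.rotate x, hF.rotate (N z)]

end IsAlt3

theorem dThree_add_right {X : Type*} (b : X → X → X) (φ χ : X → X → X → ℝ) :
    dThree b (φ + χ) = dThree b φ + dThree b χ := by
  ext x y z w
  simp only [dThree, Pi.add_apply]
  ring

theorem dThree_sub_left (hF : IsAlt3 F) (b c : g → g → g) :
    dThree (b - c) F = dThree b F - dThree c F := by
  ext x y z w
  simp only [dThree, Pi.sub_apply, hF.map_sub_left]
  ring

/-- The bracket `(x, y) ↦ π(F(x, y, ·))` on `g` obtained by raising the last index of a 3-form. -/
noncomputable def sharp (π : Module.Dual ℝ g →ₗ[ℝ] g) (hF : IsAlt3 F) (x y : g) : g :=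
  π (dual3 F hF x y)

theorem IsBivector.apply_sharp (hπ : IsBivector π) (hF : IsAlt3 F) (hG : IsAlt3 G)
    (x y z w : g) : G (sharp π hF x y) z w = -F (sharp π hG z w) x y := by
  rw [hG.rotate, hF.rotate]
  exact hπ (dual3 G hG z w) (dual3 F hF x y)

theorem IsBivector.dThree_sharp (hπ : IsBivector π) (hF : IsAlt3 F) (hG : IsAlt3 G) :
    dThree (sharp π hF) G = -dThree (sharp π hG) F := by
  ext x y z w
  simp only [dThree, Pi.neg_apply, hπ.apply_sharp hF hG]
  ring

theorem IsBivector.dThree_sharp_self (hπ : IsBivector π) (hF : IsAlt3 F) :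
    dThree (sharp π hF) F = 0 := by
  ext x y z w
  exact self_eq_neg.mp (congrFun₃ (congrFun (hπ.dThree_sharp hF hF) x) y z w)

/-- The sum of the values of a 4-form with `N` inserted in two of its slots; `calH` is the
corresponding operation on 3-forms. -/
def calFour (N : g →ₗ[ℝ] g) (Θ : g → g → g → g → ℝ) (x y z w : g) : ℝ :=
  Θ (N x) (N y) z w + Θ (N x) y (N z) w + Θ (N x) y z (N w) +
    Θ x (N y) (N z) w + Θ x (N y) z (N w) + Θ x y (N z) (N w)

theorem iN3_brN (hH : IsAlt3 H) (x y z w : g) :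
    iN3 N H (brN N x y) z w =
      (H ⁅N x, N y⁆ z w + H ⁅N x, y⁆ (N z) w + H ⁅N x, y⁆ z (N w) +
        H ⁅x, N y⁆ (N z) w + H ⁅x, N y⁆ z (N w) + H ⁅x, y⁆ (N z) (N w)) -
      calH N H ⁅x, y⁆ z w - H (torN N x y) z w := by
  have torsion : H (torN N x y) z w = H ⁅N x, N y⁆ z w - H (N (brN N x y)) z w :=
    hH.map_sub_left _ _ _ _
  rw [torsion, iN3, hH.calH_apply]
  simp only [brN, hH.map_sub_left, hH.map_add_left]
  ring

theorem dThree_brN_iN3 (hH : IsAlt3 H) :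
    dThree (brN N) (iN3 N H) =
      calFour N (dThree lie H) - dThree lie (calH N H) - dThree (torN N) H := by
  ext x y z w
  simp only [dThree, lie, calFour, Pi.sub_apply, iN3_brN hH]
  ring

theorem torN_eq_sharp_sub_sharp (hN : N ∘ₗ π = π ∘ₗ N.dualMap) (hψ : IsAlt3 ψ) (hH : IsAlt3 H)
    (torsion : ∀ x y, torN N x y =
      π (dual3 H hH (N x) y - dual3 H hH (N y) x + dual3 ψ hψ x y)) :
    torN N = sharp π (hψ.add (hH.iN3 N)) - sharp (N ∘ₗ π) hH := by
  ext x y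
  simp only [Pi.sub_apply, sharp, torsion, hN, LinearMap.comp_apply, ← map_sub]
  congr 1
  ext z
  simp only [dual3, iN3, LinearMap.add_apply, LinearMap.sub_apply, LinearMap.dualMap_apply,
    IsLinearMap.mk'_apply, Pi.add_apply]
  rw [hH.alt12 (N y)]
  ring

theorem dThree_brN_sub_sharp_eq_zero (hπ : IsBivector π) (hN : N ∘ₗ π = π ∘ₗ N.dualMap)
    (hψ : IsAlt3 ψ) (hH : IsAlt3 H) (closed_H : dThree lie H = 0)
    (torsion : ∀ x y, torN N x y =
      π (dual3 H hH (N x) y - dual3 H hH (N y) x + dual3 ψ hψ x y))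
    (dN_psi : dThree (brN N) ψ = dThree lie (calH N H)) :
    dThree (brN N - sharp π hH) (ψ + iN3 N H) = 0 := by
  have hφ : IsAlt3 (ψ + iN3 N H) := hψ.add (hH.iN3 N)
  have dN_iN3 : dThree (brN N) (iN3 N H) = -dThree lie (calH N H) - dThree (torN N) H := by
    rw [dThree_brN_iN3 hH, closed_H]
    ext
    simp [calFour]
  have dTor : dThree (torN N) H = -dThree (sharp π hH) (ψ + iN3 N H) := by
    rw [torN_eq_sharp_sub_sharp hN hψ hH torsion, dThree_sub_left hH,
      (hπ.comp_of_compat hN).dThree_sharp_self, sub_zero, hπ.dThree_sharp hφ hH]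
  calc
    dThree (brN N - sharp π hH) (ψ + iN3 N H)
      = dThree (brN N) ψ + dThree (brN N) (iN3 N H) -
          dThree (sharp π hH) (ψ + iN3 N H) := by
        rw [dThree_sub_left hφ, dThree_add_right (brN N)]
    _ = 0 := by
        rw [dN_psi, dN_iN3, dTor]
        abel

end PqN

open PqN in
theorem pqn_gives_quasi_bialgebroid_general
    {g : Type*} [LieRing g] [LieAlgebra ℝ g]
    {π : Module.Dual ℝ g →ₗ[ℝ] g} {N : g →ₗ[ℝ] g} {ψ H : g → g → g → ℝ}
    (hπ : IsPoisson π) (hN : N ∘ₗ π = π ∘ₗ N.dualMap) (hψ : IsAlt3 ψ) (hH : IsAlt3 H)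
    (closed_H : dThree lie H = 0)
    (torsion : ∀ x y, torN N x y =
      π (dual3 H hH (N x) y - dual3 H hH (N y) x + dual3 ψ hψ x y))
    (dN_psi : dThree (brN N) ψ = dThree lie (calH N H)) :
    (∀ α β γ : Module.Dual ℝ g,
      brPi π α (brPi π β γ) = brPi π (brPi π α β) γ + brPi π β (brPi π α γ)) ∧
    dThree (brN N - sharp π hH) (ψ + iN3 N H) = 0 :=
  ⟨hπ.brPi_leibniz,
    dThree_brN_sub_sharp_eq_zero hπ.isBivector hN hψ hH closed_H torsion dN_psi⟩

open PqN in
/-- For a Poisson quasi-Nijenhuis structure with background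
`(π, N, ψ, H)`: (a) `[·,·]_π` satisfies the Jacobi identity on `g*`; and
(b) `δ(ψ + i_N H) = 0`, where `δ` is the unique degree-one derivation of
`Λ•g*` vanishing on scalars with `δα = d_N α − H(πα,·,·)`.  On 3-forms this
derivation is given by the Chevalley–Eilenberg-type formula `dThree` of the
skew bracket `c(x,y) = [x,y]_N − π(H(x,y,·))`, which is the unique derivation
extending `δα = d_N α − H(πα,·,·)` (indeed `(δα)(x,y) = −α(c(x,y))`, using
the skew-symmetry of `π`). -/
theorem pqn_gives_quasi_bialgebroid
    {g : Type*} [LieRing g] [LieAlgebra ℝ g] [FiniteDimensional ℝ g]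
    (π : Module.Dual ℝ g →ₗ[ℝ] g) (N : g →ₗ[ℝ] g)
    (ψ H : g → g → g → ℝ)
    (hs : IsPQNwB π N ψ H) :
    (∀ α β γ : Module.Dual ℝ g,
      brPi π α (brPi π β γ) = brPi π (brPi π α β) γ + brPi π β (brPi π α γ)) ∧
    (∀ x y z w : g,
      dThree (fun a b => brN N a b - π (dual3 H hs.alt_H a b))
        (fun a b c => ψ a b c + iN3 N H a b c) x y z w = 0) := by
  have ⟨jacobi, closed⟩ := pqn_gives_quasi_bialgebroid_general ⟨hs.skew, hs.poisson⟩ hs.compat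
    hs.alt_psi hs.alt_H (by ext; exact hs.closed_H ..) hs.torsion (by ext; exact hs.dN_psi ..)
  exact ⟨jacobi, fun x y z w => congrFun₃ (congrFun closed x) y z w⟩
end

section
/- Let g be a finite-dimensional real Lie algebra, π a Poisson bivector on g, and ω a 2-form on g. Set N := π ∘ ω♭ and H := −dω. Then for all α, β ∈ g*: C_{π,N}(α,β) = 2 H(πα, πβ, ·) (an equality in g*). -/
/-!
The bivector and the 2-form being skew, the transpose of `N = π ∘ ω♭` is `ω♭ ∘ π`, so
`N ∘ π = π ∘ tN`. This compatibility alone makes the terms of the concomitant pair up: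
`C(α, β)(z) = 2 (β(N[πα, z]) − α(N[πβ, z]) + α[πβ, Nz] − β[πα, Nz])`.
The first two terms are `ω(πβ, [πα, z])` and `−ω(πα, [πβ, z])`. Since `Nz = π(ω♭z)`, the last two
are the Jacobiator of `π` at `(α, β, ω♭z)`, which vanishes when `π` is Poisson, without its third
term; the resulting `−ω(z, [πα, πβ])` completes the first two terms to `−dω(πα, πβ, z)`.
-/

namespace PqN

section SkewMaps

variable {R M : Type*} [CommRing R] [AddCommGroup M] [Module R M]
  {π : Module.Dual R M →ₗ[R] M} {ω : M →ₗ[R] Module.Dual R M}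

theorem dual_apply_skew_comp (hπ : ∀ α β : Module.Dual R M, α (π β) = -β (π α))
    (hω : ∀ x y : M, ω x y = -ω y x) (α : Module.Dual R M) (x : M) :
    α (π (ω x)) = ω (π α) x := by
  rw [hπ, hω (π α)]

theorem dualMap_skew_comp (hπ : ∀ α β : Module.Dual R M, α (π β) = -β (π α))
    (hω : ∀ x y : M, ω x y = -ω y x) : (π ∘ₗ ω).dualMap = ω ∘ₗ π := by
  ext α x
  exact dual_apply_skew_comp hπ hω α x

theorem skew_comp_compat (hπ : ∀ α β : Module.Dual R M, α (π β) = -β (π α))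
    (hω : ∀ x y : M, ω x y = -ω y x) : (π ∘ₗ ω) ∘ₗ π = π ∘ₗ (π ∘ₗ ω).dualMap := by
  rw [dualMap_skew_comp hπ hω, LinearMap.comp_assoc]

end SkewMaps

variable {g : Type*} [LieRing g] [LieAlgebra ℝ g]

theorem brPi_apply (π : Module.Dual ℝ g →ₗ[ℝ] g) (α β : Module.Dual ℝ g) (z : g) :
    brPi π α β z = α ⁅π β, z⁆ - β ⁅π α, z⁆ := by
  change -β ⁅π α, z⁆ - -α ⁅π β, z⁆ = _
  ring

theorem brNPi_apply (π : Module.Dual ℝ g →ₗ[ℝ] g) (N : g →ₗ[ℝ] g) (α β : Module.Dual ℝ g)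
    (z : g) : brNPi π N α β z = α (brN N (π β) z) - β (brN N (π α) z) := by
  change -β (brN N (π α) z) + α (brN N (π β) z) = _
  ring

theorem conc_apply_of_compat {π : Module.Dual ℝ g →ₗ[ℝ] g} {N : g →ₗ[ℝ] g}
    (hNπ : N ∘ₗ π = π ∘ₗ N.dualMap) (α β : Module.Dual ℝ g) (z : g) :
    conc π N α β z =
      2 * (β (N ⁅π α, z⁆) - α (N ⁅π β, z⁆) + α ⁅π β, N z⁆ - β ⁅π α, N z⁆) := by
  have hπN (γ : Module.Dual ℝ g) : π (N.dualMap γ) = N (π γ) := (LinearMap.congr_fun hNπ γ).symm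
  simp only [conc, LinearMap.add_apply, LinearMap.sub_apply, LinearMap.dualMap_apply, brPi_apply,
    brNPi_apply, brN, hπN, map_add, map_sub]
  ring

theorem neg_dTwo_lie_of_skew {ω : g →ₗ[ℝ] Module.Dual ℝ g} (hω : ∀ x y : g, ω x y = -ω y x)
    (x y z : g) :
    -dTwo lie (fun a b => ω a b) x y z = ω y ⁅x, z⁆ - ω x ⁅y, z⁆ - ω z ⁅x, y⁆ := by
  rw [hω y, hω x, hω z]
  simp only [dTwo, lie]
  ring

/-- The Jacobiator of a bivector `π`, that is, its Schouten square `[π, π]` up to a constant factor,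
as a trilinear function on the dual; `π` is Poisson when it vanishes. -/
def jacobiator (π : Module.Dual ℝ g →ₗ[ℝ] g) (α β γ : Module.Dual ℝ g) : ℝ :=
  α ⁅π β, π γ⁆ + β ⁅π γ, π α⁆ + γ ⁅π α, π β⁆

theorem apply_lie_sub_apply_lie_eq_jacobiator (π : Module.Dual ℝ g →ₗ[ℝ] g)
    (α β γ : Module.Dual ℝ g) :
    α ⁅π β, π γ⁆ - β ⁅π α, π γ⁆ = jacobiator π α β γ - γ ⁅π α, π β⁆ := by
  rw [jacobiator, ← lie_skew (π α) (π γ), map_neg]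
  ring

end PqN

open PqN in
theorem pair_concomitant_eq_general {g : Type*} [LieRing g] [LieAlgebra ℝ g]
    {π : Module.Dual ℝ g →ₗ[ℝ] g} (hπ : ∀ α β : Module.Dual ℝ g, α (π β) = -β (π α))
    {ω : g →ₗ[ℝ] Module.Dual ℝ g} (hω : ∀ x y : g, ω x y = -ω y x)
    (α β : Module.Dual ℝ g) (z : g) :
    conc π (π ∘ₗ ω) α β z =
      2 * (-dTwo lie (fun a b => ω a b) (π α) (π β) z) + 2 * jacobiator π α β (ω z) := by
  have hN (γ : Module.Dual ℝ g) (x : g) : γ ((π ∘ₗ ω) x) = ω (π γ) x :=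
    dual_apply_skew_comp hπ hω γ x
  calc
    conc π (π ∘ₗ ω) α β z
      = 2 * (ω (π β) ⁅π α, z⁆ - ω (π α) ⁅π β, z⁆
          + (α ⁅π β, π (ω z)⁆ - β ⁅π α, π (ω z)⁆)) := by
        rw [conc_apply_of_compat (skew_comp_compat hπ hω), hN, hN, LinearMap.comp_apply,
          add_sub_assoc]
    _ = 2 * (ω (π β) ⁅π α, z⁆ - ω (π α) ⁅π β, z⁆
          + (jacobiator π α β (ω z) - ω z ⁅π α, π β⁆)) := by
        rw [apply_lie_sub_apply_lie_eq_jacobiator]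
    _ = 2 * (-dTwo lie (fun a b => ω a b) (π α) (π β) z) + 2 * jacobiator π α β (ω z) := by
        rw [neg_dTwo_lie_of_skew hω]
        ring

open PqN in
/-- For a Poisson bivector `π` and a 2-form `ω`, with
`N := π∘ω♭` and `H := −dω`: `C_{π,N}(α,β) = 2H(πα,πβ,·)` for all `α, β`. -/
theorem pair_concomitant_eq
    {g : Type*} [LieRing g] [LieAlgebra ℝ g] [FiniteDimensional ℝ g]
    (π : Module.Dual ℝ g →ₗ[ℝ] g)
    (hπ : ∀ α β : Module.Dual ℝ g, α (π β) = -β (π α))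
    (hπP : ∀ α β γ : Module.Dual ℝ g,
      α ⁅π β, π γ⁆ + β ⁅π γ, π α⁆ + γ ⁅π α, π β⁆ = 0)
    (ω : g →ₗ[ℝ] Module.Dual ℝ g) (hω : ∀ x y : g, ω x y = -ω y x)
    (N : g →ₗ[ℝ] g) (hN : N = π ∘ₗ ω) :
    ∀ (α β : Module.Dual ℝ g) (z : g),
      conc π N α β z = 2 * (-dTwo lie (fun a b => ω a b) (π α) (π β) z) := by
  intro α β z
  have hJ : jacobiator π α β (ω z) = 0 := hπP α β (ω z)
  rw [hN, pair_concomitant_eq_general hπ hω, hJ, mul_zero, add_zero]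
end

section
/- Let g be a finite-dimensional real Lie algebra, π a Poisson bivector on g, and ω a 2-form on g. Set N := π ∘ ω♭, ω_N(x,y) := ω(Nx,y), H := −dω, and ψ := dω_N. Then d_N ψ = d𝓗, i.e. the 4-form obtained by applying the Chevalley–Eilenberg-type operator of the deformed bracket [·,·]_N to ψ equals the Chevalley–Eilenberg differential of the 3-form 𝓗(x,y,z) = H(Nx,Ny,z) + H(Ny,Nz,x) + H(Nz,Nx,y). -/
/-!
The insertion of `N` satisfies `d_N = i_N d - d i_N`, so on the exact form `ψ = dω_N` it gives
`d_N ψ = -d i_N ψ`. On the other hand, `N` being self-adjoint for `ω`, expanding all brackets yields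
`𝓗 = P + dω_{N²} - i_N ψ`, where `P` is the cyclic sum of `ω([Nx,Ny],z)`. This `P` is the pullback
of `[π,π]` (up to a factor) along `ω♭`, so it vanishes and `d𝓗 = -d i_N ψ` as well.
-/

namespace PqN

/-- The insertion `i_N` of an endomorphism into a 4-form, continuing `iN2` and `iN3`. -/
def iN4 {V : Type*} [AddCommGroup V] [Module ℝ V] (N : V →ₗ[ℝ] V)
    (θ : V → V → V → V → ℝ) (x y z w : V) : ℝ :=
  θ (N x) y z w + θ x (N y) z w + θ x y (N z) w + θ x y z (N w)

lemma iN4_zero {V : Type*} [AddCommGroup V] [Module ℝ V] (N : V →ₗ[ℝ] V) : iN4 N 0 = 0 := by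
  ext x y z w
  simp [iN4]

lemma dThree_sub {X : Type*} (br : X → X → X) (φ χ : X → X → X → ℝ) :
    dThree br (φ - χ) = dThree br φ - dThree br χ := by
  ext x y z w
  simp only [dThree, Pi.sub_apply]
  ring

lemma lie_lie_sub_lie_lie_add_lie_lie {L : Type*} [LieRing L] (a b c : L) :
    ⁅⁅a, b⁆, c⁆ - ⁅⁅a, c⁆, b⁆ + ⁅⁅b, c⁆, a⁆ = 0 := by
  rw [lie_lie a b c, ← lie_skew b ⁅a, c⁆, ← lie_skew a ⁅b, c⁆]
  abel

section Skew

variable {R V : Type*} [CommRing R] [AddCommGroup V] [Module R V] {ω : V →ₗ[R] Module.Dual R V}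

lemma comp_apply_eq_neg_of_skew (hω : ∀ x y, ω x y = -ω y x)
    {f : V →ₗ[R] V} (hf : ω.IsSelfAdjoint f) (x y : V) :
    (ω ∘ₗ f) x y = -(ω ∘ₗ f) y x := by
  rw [LinearMap.comp_apply, LinearMap.comp_apply, hf x y, hω]

lemma isSelfAdjoint_comp_of_skew {π : Module.Dual R V →ₗ[R] V}
    (hπ : ∀ α β : Module.Dual R V, α (π β) = -β (π α))
    (hω : ∀ x y, ω x y = -ω y x) : ω.IsSelfAdjoint (π ∘ₗ ω) := fun x y => by
  rw [LinearMap.comp_apply, LinearMap.comp_apply, hω, hπ, neg_neg]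

end Skew

variable {g : Type*} [LieRing g] [LieAlgebra ℝ g]

lemma dThree_brN (N : g →ₗ[ℝ] g) {φ : g → g → g → ℝ}
    (hφ : ∀ y z, IsLinearMap ℝ fun x => φ x y z) :
    dThree (brN N) φ = iN4 N (dThree lie φ) - dThree lie (iN3 N φ) := by
  have apply_brN (a b c d : g) :
      φ (brN N a b) c d = φ ⁅N a, b⁆ c d + φ ⁅a, N b⁆ c d - φ (N ⁅a, b⁆) c d := by
    rw [brN, (hφ c d).map_sub, (hφ c d).map_add]
  ext x y z w
  simp only [dThree, apply_brN, iN3, iN4, lie, Pi.sub_apply]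
  ring

lemma isLinearMap_dTwo_lie (τ : g →ₗ[ℝ] Module.Dual ℝ g) (y z : g) :
    IsLinearMap ℝ fun x => dTwo lie (fun p q => τ p q) x y z where
  map_add x x' := by
    simp only [dTwo, lie, add_lie, map_add, LinearMap.add_apply]
    ring
  map_smul c x := by
    simp only [dTwo, lie, smul_lie, map_smul, LinearMap.smul_apply, smul_eq_mul]
    ring

lemma dThree_lie_dTwo_lie {τ : g →ₗ[ℝ] Module.Dual ℝ g} (hτ : ∀ x y, τ x y = -τ y x) :
    dThree lie (dTwo lie fun p q => τ p q) = 0 := by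
  have jacobi (a b c d : g) : τ ⁅⁅a, b⁆, c⁆ d - τ ⁅⁅a, c⁆, b⁆ d + τ ⁅⁅b, c⁆, a⁆ d = 0 := by
    simpa using congrArg (fun v => τ v d) (lie_lie_sub_lie_lie_add_lie_lie a b c)
  ext x y z w
  simp only [dThree, dTwo, lie, Pi.zero_apply]
  linarith [jacobi x y z w, jacobi x y w z, jacobi x z w y, jacobi y z w x,
    hτ ⁅x, y⁆ ⁅z, w⁆, hτ ⁅x, z⁆ ⁅y, w⁆, hτ ⁅x, w⁆ ⁅y, z⁆]

lemma dThree_brN_dTwo_lie (N : g →ₗ[ℝ] g) {τ : g →ₗ[ℝ] Module.Dual ℝ g}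
    (hτ : ∀ x y, τ x y = -τ y x) :
    dThree (brN N) (dTwo lie fun p q => τ p q)
      = -dThree lie (iN3 N (dTwo lie fun p q => τ p q)) := by
  rw [dThree_brN N (isLinearMap_dTwo_lie τ), dThree_lie_dTwo_lie hτ, iN4_zero, zero_sub]

lemma calH_neg_dTwo_lie {ω : g →ₗ[ℝ] Module.Dual ℝ g} {N : g →ₗ[ℝ] g}
    (hN : ω.IsSelfAdjoint N) (x y z : g) :
    calH N (fun a b c => -dTwo lie (fun p q => ω p q) a b c) x y z
      = ω ⁅N x, N y⁆ z + ω ⁅N y, N z⁆ x + ω ⁅N z, N x⁆ y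
        + dTwo lie (fun p q => ω (N (N p)) q) x y z
        - iN3 N (dTwo lie fun p q => ω (N p) q) x y z := by
  have lie_swap (a b c : g) : ω ⁅a, b⁆ c = -ω ⁅b, a⁆ c := by
    rw [← lie_skew, map_neg, LinearMap.neg_apply]
  simp only [calH, dTwo, iN3, lie, hN _ _]
  linarith [lie_swap (N z) (N x) y, lie_swap z (N x) (N y), lie_swap x (N y) (N z),
    lie_swap y (N z) (N x), lie_swap (N z) x (N y)]

lemma cyclic_lie_comp_eq_zero {π : Module.Dual ℝ g →ₗ[ℝ] g} {ω : g →ₗ[ℝ] Module.Dual ℝ g}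
    (hπ : ∀ α β γ : Module.Dual ℝ g, α ⁅π β, π γ⁆ + β ⁅π γ, π α⁆ + γ ⁅π α, π β⁆ = 0)
    (hω : ∀ x y, ω x y = -ω y x) (x y z : g) :
    ω ⁅(π ∘ₗ ω) x, (π ∘ₗ ω) y⁆ z + ω ⁅(π ∘ₗ ω) y, (π ∘ₗ ω) z⁆ x
      + ω ⁅(π ∘ₗ ω) z, (π ∘ₗ ω) x⁆ y = 0 := by
  rw [hω _ x, hω _ y, hω _ z]
  simp only [LinearMap.comp_apply]
  linarith [hπ (ω x) (ω y) (ω z)]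

end PqN

open PqN in
theorem pair_dN_psi_eq_general
    {g : Type*} [LieRing g] [LieAlgebra ℝ g]
    {ω : g →ₗ[ℝ] Module.Dual ℝ g} (hω : ∀ x y : g, ω x y = -ω y x)
    {N : g →ₗ[ℝ] g} (hN : ω.IsSelfAdjoint N)
    (hP : ∀ x y z : g, ω ⁅N x, N y⁆ z + ω ⁅N y, N z⁆ x + ω ⁅N z, N x⁆ y = 0) :
    dThree (brN N) (dTwo lie fun p q => ω (N p) q)
      = dThree lie (calH N fun a b c => -dTwo lie (fun p q => ω p q) a b c) := by
  have hNN : ω.IsSelfAdjoint (N ∘ₗ N) := hN.comp hN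
  have calH_eq : (calH N fun a b c => -dTwo lie (fun p q => ω p q) a b c)
      = (dTwo lie fun p q => (ω ∘ₗ N ∘ₗ N) p q) - iN3 N (dTwo lie fun p q => (ω ∘ₗ N) p q) := by
    ext x y z
    rw [calH_neg_dTwo_lie hN, hP, zero_add]
    rfl
  calc dThree (brN N) (dTwo lie fun p q => (ω ∘ₗ N) p q)
      = -dThree lie (iN3 N (dTwo lie fun p q => (ω ∘ₗ N) p q)) :=
        dThree_brN_dTwo_lie N (comp_apply_eq_neg_of_skew hω hN)
    _ = dThree lie (calH N fun a b c => -dTwo lie (fun p q => ω p q) a b c) := by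
        rw [calH_eq, dThree_sub, dThree_lie_dTwo_lie (comp_apply_eq_neg_of_skew hω hNN), zero_sub]

open PqN in
/-- For a Poisson bivector `π` and a 2-form `ω`, with
`N := π∘ω♭`, `ω_N(x,y) := ω(Nx,y)`, `H := −dω`, `ψ := dω_N`:
`d_N ψ = d𝓗`, where `𝓗(x,y,z) = H(Nx,Ny,z) + H(Ny,Nz,x) + H(Nz,Nx,y)`. -/
theorem pair_dN_psi_eq
    {g : Type*} [LieRing g] [LieAlgebra ℝ g] [FiniteDimensional ℝ g]
    (π : Module.Dual ℝ g →ₗ[ℝ] g)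
    (hπ : ∀ α β : Module.Dual ℝ g, α (π β) = -β (π α))
    (hπP : ∀ α β γ : Module.Dual ℝ g,
      α ⁅π β, π γ⁆ + β ⁅π γ, π α⁆ + γ ⁅π α, π β⁆ = 0)
    (ω : g →ₗ[ℝ] Module.Dual ℝ g) (hω : ∀ x y : g, ω x y = -ω y x)
    (N : g →ₗ[ℝ] g) (hN : N = π ∘ₗ ω) :
    ∀ x y z w : g,
      dThree (brN N) (fun a b c => dTwo lie (fun p q => ω (N p) q) a b c) x y z w
        = dThree lie
            (calH N (fun a b c => -dTwo lie (fun p q => ω p q) a b c)) x y z w := by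
  subst hN
  exact fun x y z w => congrFun (congr_fun₃ (pair_dN_psi_eq_general hω
    (isSelfAdjoint_comp_of_skew hπ hω) (cyclic_lie_comp_eq_zero hπP hω)) x y z) w
end
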